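/- arXiv:2602.11041 — 4 statements merged into one kernel-verified Lean document; each statement's English description precedes it below -/
import Mathlib

section
/- Let n ≥ 2 and q ≥ 1 be integers, let n_0, …, n_{q−1} be integers with 1 ≤ n_i < n for all i, let s_0, …, s_{q−1} be positive reals with ∑_{i=0}^{q−1} s_i·n_i² > n², and let A ≥ 0 be real. Let ω₀ be the real number with n^{ω₀} = ∑_{i=0}^{q−1} s_i·n_i^{ω₀}, and assume ω₀ < 3. Let N₀ be an integer with N₀ > n·n_i/(n − n_i) for all i. Suppose T : ℕ → ℝ satisfies T(N) = 2N³ − N² for all 1 ≤ N < N₀ and T(N) ≤ ∑_{i=0}^{q−1} s_i·T(⌈N/n⌉·n_i) + A·⌈N/n⌉² for all N ≥ N₀. Then there exists a constant C > 0 such that T(N) ≤ C·N^{ω₀} for all N ≥ 1. -/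
theorem srb_pow_diff (w a b : ℝ) (hw : 1 ≤ w) (ha : 0 < a) (hb : 0 ≤ b) :
    (a + b) ^ w - a ^ w ≤ w * b * (a + b) ^ (w - 1) := by
  have hab : 0 < a + b := by linarith
  have h := one_add_mul_self_le_rpow_one_add (s := -(b / (a + b))) (p := w) (by
    have : b / (a + b) ≤ 1 := by rw [div_le_one hab]; linarith
    linarith) hw
  have e : 1 + -(b / (a + b)) = a / (a + b) := by field_simp; ring
  rw [e, Real.div_rpow ha.le hab.le, le_div_iff₀ (by positivity)] at h
  have e2 : (a + b) ^ w = (a + b) ^ (w - 1) * (a + b) := by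
    rw [Real.rpow_sub_one hab.ne']; field_simp
  have e3 : b / (a + b) * (a + b) ^ w = b * (a + b) ^ (w - 1) := by
    rw [e2]; field_simp
  have e4 : (1 + w * -(b / (a + b))) * (a + b) ^ w
      = (a + b) ^ w - w * (b / (a + b) * (a + b) ^ w) := by ring
  rw [e4, e3] at h
  linarith

theorem srb_asymp (w β A n e : ℝ) (hw : 2 < w) (h2 : 2 < β) (h1 : w - 1 < β) (hA : 0 ≤ A)
    (hn : 0 < n) (he : 0 < e) :
    ∀ᶠ N : ℕ in Filter.atTop,
      ((N : ℝ) + n) ^ w - (N : ℝ) ^ w + A * (N : ℝ) ^ 2 ≤ e * (N : ℝ) ^ β := by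
  obtain ⟨γ, hγ2, hγ1, hγ⟩ : ∃ γ : ℝ, 2 ≤ γ ∧ w - 1 ≤ γ ∧ γ < β :=
    ⟨max 2 (w - 1), le_max_left _ _, le_max_right _ _, max_lt h2 h1⟩
  have ht : Filter.Tendsto (fun N : ℕ => (N : ℝ) ^ (β - γ)) Filter.atTop Filter.atTop :=
    (tendsto_rpow_atTop (by linarith)).comp tendsto_natCast_atTop_atTop
  filter_upwards [ht.eventually_ge_atTop ((w * n * 2 ^ (w - 1) + A) / e),
    Filter.eventually_ge_atTop 1, tendsto_natCast_atTop_atTop.eventually_ge_atTop n]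
    with N hN hN1 hNn
  have hN1' : (1 : ℝ) ≤ N := by exact_mod_cast hN1
  have hpos : (0 : ℝ) < N := by linarith
  rw [div_le_iff₀ he] at hN
  have a1 := srb_pow_diff w N n (by linarith) hpos hn.le
  have a2 : ((N : ℝ) + n) ^ (w - 1) ≤ 2 ^ (w - 1) * (N : ℝ) ^ γ := by
    calc ((N : ℝ) + n) ^ (w - 1) ≤ (2 * N) ^ (w - 1) :=
          Real.rpow_le_rpow (by positivity) (by linarith) (by linarith)
      _ = 2 ^ (w - 1) * (N : ℝ) ^ (w - 1) := Real.mul_rpow (by norm_num) hpos.le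
      _ ≤ _ := by
          gcongr
  have a3 : (N : ℝ) ^ 2 ≤ (N : ℝ) ^ γ := by
    rw [← Real.rpow_natCast]
    exact Real.rpow_le_rpow_of_exponent_le hN1' (by simpa using hγ2)
  have a4 : (N : ℝ) ^ β = (N : ℝ) ^ (β - γ) * (N : ℝ) ^ γ := by
    rw [← Real.rpow_add hpos]; congr 1; ring
  have a5 : 0 < (N : ℝ) ^ γ := by positivity
  have hwn : 0 ≤ w * n := by nlinarith
  calc ((N : ℝ) + n) ^ w - (N : ℝ) ^ w + A * (N : ℝ) ^ 2
      ≤ w * n * (2 ^ (w - 1) * (N : ℝ) ^ γ) + A * (N : ℝ) ^ γ :=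
        add_le_add (a1.trans (mul_le_mul_of_nonneg_left a2 hwn))
          (mul_le_mul_of_nonneg_left a3 hA)
    _ = (w * n * 2 ^ (w - 1) + A) * (N : ℝ) ^ γ := by ring
    _ ≤ ((N : ℝ) ^ (β - γ) * e) * (N : ℝ) ^ γ := mul_le_mul_of_nonneg_right hN a5.le
    _ = e * (N : ℝ) ^ β := by rw [a4]; ring

/-- the operation-count recurrence of the recursive algorithm
obtained from a restriction `⟨n,n,n⟩ ≤ ⊕ᵢ sᵢ ⊙ ⟨nᵢ,nᵢ,nᵢ⟩`.
Here `⌈N/n⌉` is written as the natural number `(N + n - 1) / n`. -/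
theorem structured_recurrence_bound (n q : ℕ) (hn : 2 ≤ n) (hq : 1 ≤ q)
    (nn : Fin q → ℕ) (hnn : ∀ i, 1 ≤ nn i ∧ nn i < n)
    (s : Fin q → ℝ) (hs : ∀ i, 0 < s i)
    (hbig : (n : ℝ) ^ 2 < ∑ i, s i * (nn i : ℝ) ^ 2)
    (A : ℝ) (hA : 0 ≤ A)
    (ω₀ : ℝ) (hω : (n : ℝ) ^ ω₀ = ∑ i, s i * (nn i : ℝ) ^ ω₀) (hω₃ : ω₀ < 3)
    (N₀ : ℕ) (hN₀ : ∀ i, (N₀ : ℝ) > (n : ℝ) * (nn i : ℝ) / ((n : ℝ) - (nn i : ℝ)))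
    (T : ℕ → ℝ)
    (hbase : ∀ N : ℕ, 1 ≤ N → N < N₀ → T N = 2 * (N : ℝ) ^ 3 - (N : ℝ) ^ 2)
    (hrec : ∀ N : ℕ, N₀ ≤ N →
      T N ≤ (∑ i, s i * T (((N + n - 1) / n) * nn i))
              + A * (((N + n - 1) / n : ℕ) : ℝ) ^ 2) :
    ∃ C : ℝ, 0 < C ∧ ∀ N : ℕ, 1 ≤ N → T N ≤ C * (N : ℝ) ^ ω₀ := by
  have hn0 : (0 : ℝ) < n := by exact_mod_cast (by omega : 0 < n)
  have hp : ∀ i, (0 : ℝ) < nn i := fun i => by exact_mod_cast (hnn i).1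
  have hlt : ∀ i, (nn i : ℝ) < n := fun i => by exact_mod_cast (hnn i).2
  haveI : Nonempty (Fin q) := ⟨⟨0, hq⟩⟩
  have hw2 : 2 < ω₀ := by
    by_contra hcon
    push Not at hcon
    have : ∑ i, s i * (nn i : ℝ) ^ 2 ≤ (n : ℝ) ^ 2 := by
      calc ∑ i, s i * (nn i : ℝ) ^ 2
          ≤ ∑ i, (s i * (nn i : ℝ) ^ ω₀) * (n : ℝ) ^ (2 - ω₀) := by
            refine Finset.sum_le_sum fun i _ => ?_
            have e : (nn i : ℝ) ^ 2 = (nn i : ℝ) ^ ω₀ * (nn i : ℝ) ^ (2 - ω₀) := by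
              rw [← Real.rpow_add (hp i), ← Real.rpow_natCast]; congr 1; push_cast; ring
            rw [e, mul_assoc]
            have h1 := hs i
            have h2 : (nn i : ℝ) ^ (2 - ω₀) ≤ (n : ℝ) ^ (2 - ω₀) :=
              Real.rpow_le_rpow (hp i).le (hlt i).le (by linarith)
            have h3 := Real.rpow_pos_of_pos (hp i) ω₀
            gcongr
        _ = (n : ℝ) ^ 2 := by
            rw [← Finset.sum_mul, ← hω, ← Real.rpow_add hn0, ← Real.rpow_natCast]
            congr 1; push_cast; ring
    linarith
  obtain ⟨β, hβm, hβw⟩ := exists_between (max_lt hw2 (by linarith : ω₀ - 1 < ω₀))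
  have hβ2 : 2 < β := (le_max_left _ _).trans_lt hβm
  have hβ1 : ω₀ - 1 < β := (le_max_right _ _).trans_lt hβm
  have hS : (n : ℝ) ^ β < ∑ i, s i * (nn i : ℝ) ^ β := by
    calc (n : ℝ) ^ β = ∑ i, (s i * (nn i : ℝ) ^ ω₀) * (n : ℝ) ^ (β - ω₀) := by
            rw [← Finset.sum_mul, ← hω, ← Real.rpow_add hn0]
            congr 1; ring
      _ < _ := by
            refine Finset.sum_lt_sum_of_nonempty Finset.univ_nonempty fun i _ => ?_
            have e : (nn i : ℝ) ^ β = (nn i : ℝ) ^ ω₀ * (nn i : ℝ) ^ (β - ω₀) := by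
              rw [← Real.rpow_add (hp i)]; congr 1; ring
            rw [e, mul_assoc]
            have h1 := hs i
            have h2 : (n : ℝ) ^ (β - ω₀) < (nn i : ℝ) ^ (β - ω₀) :=
              Real.rpow_lt_rpow_of_neg (hp i) (hlt i) (by linarith)
            have h3 := Real.rpow_pos_of_pos (hp i) ω₀
            gcongr
  set S := ∑ i, s i * (nn i : ℝ) ^ β with hSdef
  have hnβ : 0 < (n : ℝ) ^ β := by positivity
  have hE : 0 < (S - (n : ℝ) ^ β) / (n : ℝ) ^ β / 2 := by
    have : 0 < S - (n : ℝ) ^ β := by linarith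
    positivity
  obtain ⟨N₁, hN₁⟩ := Filter.eventually_atTop.1
    (srb_asymp ω₀ β A n _ hw2 hβ2 hβ1 hA hn0 hE)
  set N₂ := N₁ + N₀ + n * n with hN₂
  set C : ℝ := 1 + 2 * ∑ k ∈ Finset.range N₂, |T k| with hC
  have hsum : 0 ≤ ∑ k ∈ Finset.range N₂, |T k| := Finset.sum_nonneg fun _ _ => abs_nonneg _
  have hC1 : 1 ≤ C := by linarith
  have key : ∀ N : ℕ, 1 ≤ N → T N ≤ C * ((N : ℝ) ^ ω₀ - 1 / 2 * (N : ℝ) ^ β) := by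
    intro N
    induction N using Nat.strong_induction_on with
    | _ N ih =>
    intro hN
    have hN' : (1 : ℝ) ≤ N := by exact_mod_cast hN
    by_cases hlarge : N < N₂
    · have g1 : (N : ℝ) ^ β ≤ (N : ℝ) ^ ω₀ := Real.rpow_le_rpow_of_exponent_le hN' hβw.le
      have g2 : 1 ≤ (N : ℝ) ^ ω₀ := Real.one_le_rpow hN' (by linarith)
      have g3 : |T N| ≤ ∑ k ∈ Finset.range N₂, |T k| :=
        Finset.single_le_sum (f := fun k => |T k|) (fun _ _ => abs_nonneg _)
          (Finset.mem_range.2 hlarge)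
      have g4 : (1 / 2 : ℝ) ≤ (N : ℝ) ^ ω₀ - 1 / 2 * (N : ℝ) ^ β := by linarith
      have g5 := le_abs_self (T N)
      nlinarith
    · push Not at hlarge
      have r := hrec N (by omega)
      set M := (N + n - 1) / n with hM
      have m1 : M * n ≤ N + n - 1 := Nat.div_mul_le_self _ _
      have m2 : n ≤ M := by
        rw [hM, Nat.le_div_iff_mul_le (by omega)]; omega
      have m3 : N ≤ M * n := by
        have := Nat.div_add_mod (N + n - 1) n
        have h2 := Nat.mod_lt (N + n - 1) (by omega : 0 < n)
        rw [← hM, mul_comm] at this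
        omega
      have m4 : ∀ i, M * nn i < N := by
        intro i
        have h1 : M * (nn i + 1) ≤ M * n := Nat.mul_le_mul_left _ (hnn i).2
        rw [mul_add] at h1
        omega
      have m5 : ∀ i, 1 ≤ M * nn i := fun i => Nat.mul_pos (by omega) (hnn i).1
      have m6 : M ≤ N := by
        obtain ⟨i⟩ := (inferInstance : Nonempty (Fin q))
        exact (Nat.le_mul_of_pos_right M (hnn i).1).trans (m4 i).le
      have hM0 : (0 : ℝ) < M := by exact_mod_cast (by omega : 0 < M)
      have r1 : (M : ℝ) * n ≤ N + n := by exact_mod_cast (by omega : M * n ≤ N + n)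
      have r2 : (N : ℝ) ≤ M * n := by exact_mod_cast m3
      have r3 : (M : ℝ) ≤ N := by exact_mod_cast m6
      have hsumle : ∑ i, s i * T (M * nn i)
          ≤ C * ((M : ℝ) ^ ω₀ * (n : ℝ) ^ ω₀ - 1 / 2 * ((M : ℝ) ^ β * S)) := by
        calc ∑ i, s i * T (M * nn i)
            ≤ ∑ i, s i * (C * (((M * nn i : ℕ) : ℝ) ^ ω₀
                - 1 / 2 * ((M * nn i : ℕ) : ℝ) ^ β)) :=
              Finset.sum_le_sum fun i _ =>
                mul_le_mul_of_nonneg_left (ih _ (m4 i) (m5 i)) (hs i).le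
          _ = ∑ i, (C * (M : ℝ) ^ ω₀ * (s i * (nn i : ℝ) ^ ω₀)
                - C * (1 / 2) * (M : ℝ) ^ β * (s i * (nn i : ℝ) ^ β)) := by
              refine Finset.sum_congr rfl fun i _ => ?_
              rw [Nat.cast_mul, Real.mul_rpow hM0.le (hp i).le, Real.mul_rpow hM0.le (hp i).le]
              ring
          _ = _ := by
              rw [Finset.sum_sub_distrib, ← Finset.mul_sum, ← Finset.mul_sum, ← hω, ← hSdef]
              ring
      have asy := hN₁ N (by omega)
      have b1 : (M : ℝ) ^ ω₀ * (n : ℝ) ^ ω₀ ≤ ((N : ℝ) + n) ^ ω₀ := by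
        rw [← Real.mul_rpow hM0.le hn0.le]
        exact Real.rpow_le_rpow (by positivity) r1 (by linarith)
      have b2 : (N : ℝ) ^ β ≤ (M : ℝ) ^ β * (n : ℝ) ^ β := by
        rw [← Real.mul_rpow hM0.le hn0.le]
        exact Real.rpow_le_rpow (by positivity) r2 (by linarith)
      have b3 : A * (M : ℝ) ^ 2 ≤ A * (N : ℝ) ^ 2 := by gcongr
      have b4 : (S - (n : ℝ) ^ β) / (n : ℝ) ^ β / 2 * (N : ℝ) ^ β
          ≤ 1 / 2 * ((M : ℝ) ^ β * S) - 1 / 2 * ((M : ℝ) ^ β * (n : ℝ) ^ β) := by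
        calc _ ≤ (S - (n : ℝ) ^ β) / (n : ℝ) ^ β / 2 * ((M : ℝ) ^ β * (n : ℝ) ^ β) :=
              mul_le_mul_of_nonneg_left b2 hE.le
          _ = _ := by field_simp
      have b5 : A * (N : ℝ) ^ 2 ≤ C * (A * (N : ℝ) ^ 2) :=
        le_mul_of_one_le_left (by positivity) hC1
      have fin : C * ((M : ℝ) ^ ω₀ * (n : ℝ) ^ ω₀ - 1 / 2 * ((M : ℝ) ^ β * S)
          + A * (N : ℝ) ^ 2) ≤ C * ((N : ℝ) ^ ω₀ - 1 / 2 * (N : ℝ) ^ β) :=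
        mul_le_mul_of_nonneg_left (by linarith) (by linarith)
      rw [mul_add] at fin
      linarith
  refine ⟨C, by linarith, fun N hN => (key N hN).trans ?_⟩
  have : 0 ≤ (N : ℝ) ^ β := by positivity
  exact mul_le_mul_of_nonneg_left (by linarith) (by linarith)
end

section
/- Let K be a field. Then the matrix multiplication tensor ⟨2,2,2⟩ is a restriction of the unit tensor ⟨7⟩, witnessed by Strassen's decomposition of ⟨2,2,2⟩ into a sum of 7 rank-one tensors. -/
open TensorProduct

noncomputable section

section Defs

variable (K : Type) [Field K]
variable {U₁ U₂ U₃ V₁ V₂ V₃ W₁ W₂ W₃ : Type}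
variable [AddCommGroup U₁] [Module K U₁] [AddCommGroup U₂] [Module K U₂]
  [AddCommGroup U₃] [Module K U₃]
variable [AddCommGroup V₁] [Module K V₁] [AddCommGroup V₂] [Module K V₂]
  [AddCommGroup V₃] [Module K V₃]
variable [AddCommGroup W₁] [Module K W₁] [AddCommGroup W₂] [Module K W₂]
  [AddCommGroup W₃] [Module K W₃]

/-- `T` is a restriction of `T'` (written `T ≤ T'` in the paper): there are linear maps
`φᵢ` with `T = (φ₁ ⊗ φ₂ ⊗ φ₃)(T')`. -/
def IsRestriction (T : U₁ ⊗[K] (U₂ ⊗[K] U₃)) (T' : V₁ ⊗[K] (V₂ ⊗[K] V₃)) : Prop :=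
  ∃ (φ₁ : V₁ →ₗ[K] U₁) (φ₂ : V₂ →ₗ[K] U₂) (φ₃ : V₃ →ₗ[K] U₃),
    T = TensorProduct.map φ₁ (TensorProduct.map φ₂ φ₃) T'

/-- Direct sum of two order-3 tensors, via the canonical inclusions. -/
def dsum (T₁ : U₁ ⊗[K] (U₂ ⊗[K] U₃)) (T₂ : W₁ ⊗[K] (W₂ ⊗[K] W₃)) :
    (U₁ × W₁) ⊗[K] ((U₂ × W₂) ⊗[K] (U₃ × W₃)) :=
  TensorProduct.map (LinearMap.inl K U₁ W₁)
      (TensorProduct.map (LinearMap.inl K U₂ W₂) (LinearMap.inl K U₃ W₃)) T₁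
    + TensorProduct.map (LinearMap.inr K U₁ W₁)
      (TensorProduct.map (LinearMap.inr K U₂ W₂) (LinearMap.inr K U₃ W₃)) T₂

/-- Kronecker product of two order-3 tensors, via the canonical reassociation. -/
def kron (T₁ : U₁ ⊗[K] (U₂ ⊗[K] U₃)) (T₂ : W₁ ⊗[K] (W₂ ⊗[K] W₃)) :
    (U₁ ⊗[K] W₁) ⊗[K] ((U₂ ⊗[K] W₂) ⊗[K] (U₃ ⊗[K] W₃)) :=
  (TensorProduct.congr (LinearEquiv.refl K (U₁ ⊗[K] W₁))
      (TensorProduct.tensorTensorTensorComm K U₂ U₃ W₂ W₃))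
    ((TensorProduct.tensorTensorTensorComm K U₁ (U₂ ⊗[K] U₃) W₁ (W₂ ⊗[K] W₃))
      (T₁ ⊗ₜ[K] T₂))

/-- `k ⊙ T`: the direct sum of `k` copies of `T`, via the canonical inclusions
into the `k`-fold products. -/
def copies (k : ℕ) (T : U₁ ⊗[K] (U₂ ⊗[K] U₃)) :
    (Fin k → U₁) ⊗[K] ((Fin k → U₂) ⊗[K] (Fin k → U₃)) :=
  ∑ i : Fin k,
    TensorProduct.map (LinearMap.single K (fun _ : Fin k => U₁) i)
      (TensorProduct.map (LinearMap.single K (fun _ : Fin k => U₂) i)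
        (LinearMap.single K (fun _ : Fin k => U₃) i)) T

end Defs

/-- The matrix multiplication tensor `⟨n,m,p⟩`. -/
def matMulTensor (K : Type) [Field K] (n m p : ℕ) :
    Matrix (Fin n) (Fin m) K ⊗[K]
      (Matrix (Fin m) (Fin p) K ⊗[K] Matrix (Fin p) (Fin n) K) :=
  ∑ i : Fin n, ∑ j : Fin m, ∑ k : Fin p,
    Matrix.single i j (1 : K) ⊗ₜ[K]
      (Matrix.single j k (1 : K) ⊗ₜ[K] Matrix.single k i (1 : K))

/-- The unit tensor `⟨r⟩`. -/
def unitTensor (K : Type) [Field K] (r : ℕ) :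
    (Fin r → K) ⊗[K] ((Fin r → K) ⊗[K] (Fin r → K)) :=
  ∑ i : Fin r,
    Pi.single i (1 : K) ⊗ₜ[K] (Pi.single i (1 : K) ⊗ₜ[K] Pi.single i (1 : K))

end

theorem strassen_decomp (K : Type) [Field K] :
    ∃ (a : Fin 7 → Matrix (Fin 2) (Fin 2) K) (b : Fin 7 → Matrix (Fin 2) (Fin 2) K)
      (c : Fin 7 → Matrix (Fin 2) (Fin 2) K),
      matMulTensor K 2 2 2 = ∑ i : Fin 7, a i ⊗ₜ[K] (b i ⊗ₜ[K] c i) := by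
  let e : Fin 2 → Fin 2 → Matrix (Fin 2) (Fin 2) K := fun i j => Matrix.single i j (1 : K)
  refine ⟨![e 0 0 + e 1 1, e 1 0 + e 1 1, e 0 0, e 1 1, e 0 0 + e 0 1, e 1 0 - e 0 0,
      e 0 1 - e 1 1],
    ![e 0 0 + e 1 1, e 0 0, e 0 1 - e 1 1, e 1 0 - e 0 0, e 1 1, e 0 0 + e 0 1,
      e 1 0 + e 1 1],
    ![e 0 0 + e 1 1, e 0 1 - e 1 1, e 1 0 + e 1 1, e 0 0 + e 0 1, e 1 0 - e 0 0, e 1 1,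
      e 0 0], ?_⟩
  have h : matMulTensor K 2 2 2 = ∑ i : Fin 2, ∑ j : Fin 2, ∑ k : Fin 2,
    e i j ⊗ₜ[K] (e j k ⊗ₜ[K] e k i) := rfl
  rw [h]
  clear_value e
  simp only [Fin.sum_univ_succ, Fin.sum_univ_zero, Fin.succ_zero_eq_one, Matrix.cons_val_zero,
    Matrix.cons_val_succ, add_zero, TensorProduct.tmul_add, TensorProduct.add_tmul,
    TensorProduct.tmul_sub, TensorProduct.sub_tmul]
  abel

open TensorProduct in
/-- Strassen: `⟨2,2,2⟩ ≤ ⟨7⟩`, witnessed by a decomposition of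
`⟨2,2,2⟩` into a sum of 7 rank-one tensors. -/
theorem strassen (K : Type) [Field K] :
    IsRestriction K (matMulTensor K 2 2 2) (unitTensor K 7) ∧
    ∃ (a : Fin 7 → Matrix (Fin 2) (Fin 2) K) (b : Fin 7 → Matrix (Fin 2) (Fin 2) K)
      (c : Fin 7 → Matrix (Fin 2) (Fin 2) K),
      matMulTensor K 2 2 2 = ∑ i : Fin 7, a i ⊗ₜ[K] (b i ⊗ₜ[K] c i) := by
  refine ⟨?_, strassen_decomp K⟩
  obtain ⟨a, b, c, h⟩ := strassen_decomp K
  refine ⟨Fintype.linearCombination K a, Fintype.linearCombination K b,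
    Fintype.linearCombination K c, ?_⟩
  rw [h, unitTensor, map_sum]
  refine Finset.sum_congr rfl fun i _ => ?_
  simp [TensorProduct.map_tmul, Fintype.linearCombination_apply_single]
end

section
/- Let K be a field, n, m, p, r positive integers. If the matrix multiplication tensor ⟨n,m,p⟩ is a restriction of the unit tensor ⟨r⟩, then the square matrix multiplication tensor ⟨nmp, nmp, nmp⟩ is a restriction of the unit tensor ⟨r³⟩. -/
open TensorProduct

section Aux

variable {K : Type} [Field K]

/-- decomposition into `r` pure tensors -/
def HasDec {U₁ U₂ U₃ : Type} [AddCommGroup U₁] [Module K U₁] [AddCommGroup U₂] [Module K U₂]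
    [AddCommGroup U₃] [Module K U₃] (σ : Type) [Fintype σ] (T : U₁ ⊗[K] (U₂ ⊗[K] U₃)) : Prop :=
  ∃ (a : σ → U₁) (b : σ → U₂) (c : σ → U₃), T = ∑ s, a s ⊗ₜ[K] (b s ⊗ₜ[K] c s)

theorem hasDec_of_restr {U₁ U₂ U₃ : Type} [AddCommGroup U₁] [Module K U₁] [AddCommGroup U₂]
    [Module K U₂] [AddCommGroup U₃] [Module K U₃] (r : ℕ) (T : U₁ ⊗[K] (U₂ ⊗[K] U₃))
    (h : IsRestriction K T (unitTensor K r)) : HasDec (Fin r) T := by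
  obtain ⟨f, g, k, h⟩ := h
  refine ⟨fun s => f (Pi.single s 1), fun s => g (Pi.single s 1), fun s => k (Pi.single s 1), ?_⟩
  rw [h, unitTensor]
  simp only [map_sum, TensorProduct.map_tmul]

theorem restr_of_hasDec {U₁ U₂ U₃ : Type} [AddCommGroup U₁] [Module K U₁] [AddCommGroup U₂]
    [Module K U₂] [AddCommGroup U₃] [Module K U₃] (σ : Type) [Fintype σ] (r : ℕ)
    (hr : Fintype.card σ = r) (T : U₁ ⊗[K] (U₂ ⊗[K] U₃))
    (h : HasDec σ T) : IsRestriction K T (unitTensor K r) := by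
  obtain ⟨a, b, c, h⟩ := h
  let e : Fin r ≃ σ := (Fintype.equivFinOfCardEq hr).symm
  refine ⟨Fintype.linearCombination K (a ∘ e), Fintype.linearCombination K (b ∘ e),
    Fintype.linearCombination K (c ∘ e), ?_⟩
  rw [h, unitTensor]
  simp only [map_sum, TensorProduct.map_tmul, Fintype.linearCombination_apply_single, one_smul,
    Function.comp]
  exact (Equiv.sum_comp e (fun s => a s ⊗ₜ[K] (b s ⊗ₜ[K] c s))).symm

theorem hasDec_cyc (n m p : ℕ) (σ : Type) [Fintype σ] (h : HasDec σ (matMulTensor K n m p)) :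
    HasDec σ (matMulTensor K m p n) := by
  obtain ⟨a, b, c, h⟩ := h
  refine ⟨b, c, a, ?_⟩
  have h2 := congrArg (fun T => TensorProduct.assoc K _ _ _ (TensorProduct.comm K _ _ T)) h
  simp only [matMulTensor, map_sum, TensorProduct.comm_tmul, TensorProduct.assoc_tmul] at h2
  rw [← h2, matMulTensor]
  refine Eq.symm ?_
  rw [Finset.sum_comm]
  refine Finset.sum_congr rfl fun j _ => ?_
  rw [Finset.sum_comm]

/-- Kronecker product of matrices over `Fin` -/
def kb (n m n' m' : ℕ) : Matrix (Fin n) (Fin m) K →ₗ[K] Matrix (Fin n') (Fin m') K →ₗ[K]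
    Matrix (Fin (n * n')) (Fin (m * m')) K :=
  (Matrix.kroneckerMapBilinear (LinearMap.mul K K)).compr₂
    (Matrix.reindexLinearEquiv K K finProdFinEquiv finProdFinEquiv).toLinearMap

theorem kb_single (n m n' m' : ℕ) (i : Fin n) (j : Fin m) (i' : Fin n') (j' : Fin m') :
    kb n m n' m' (Matrix.single i j (1 : K)) (Matrix.single i' j' (1 : K)) =
      Matrix.single (finProdFinEquiv (i, i')) (finProdFinEquiv (j, j')) 1 := by
  simp [kb, Matrix.kroneckerMapBilinear,
   Matrix.kroneckerMap_single_single, Matrix.submatrix_single_equiv]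

theorem sum6 {A A' B B' C C' M : Type} [Fintype A] [Fintype A'] [Fintype B] [Fintype B']
    [Fintype C] [Fintype C'] [AddCommMonoid M] (f : A → A' → B → B' → C → C' → M) :
    ∑ x, ∑ y, ∑ x1, ∑ y1, ∑ x2, ∑ y2, f x y x1 y1 x2 y2 =
      ∑ y, ∑ y1, ∑ y2, ∑ x, ∑ x1, ∑ x2, f x y x1 y1 x2 y2 := by
  rw [Finset.sum_comm]
  refine Finset.sum_congr rfl fun y _ => ?_
  rw [Finset.sum_congr rfl fun x _ => Finset.sum_comm, Finset.sum_comm]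
  refine Finset.sum_congr rfl fun y1 _ => ?_
  rw [Finset.sum_congr rfl fun x _ => Finset.sum_congr rfl fun x1 _ => Finset.sum_comm,
    Finset.sum_congr rfl fun x _ => Finset.sum_comm, Finset.sum_comm]

theorem hasDec_kron (n m p n' m' p' : ℕ) (σ τ : Type) [Fintype σ] [Fintype τ]
    (h : HasDec σ (matMulTensor K n m p)) (h' : HasDec τ (matMulTensor K n' m' p')) :
    HasDec (σ × τ) (matMulTensor K (n * n') (m * m') (p * p')) := by
  obtain ⟨a, b, c, h⟩ := h
  obtain ⟨a', b', c', h'⟩ := h'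
  refine ⟨fun s => kb _ _ _ _ (a s.1) (a' s.2), fun s => kb _ _ _ _ (b s.1) (b' s.2),
    fun s => kb _ _ _ _ (c s.1) (c' s.2), ?_⟩
  have key := congrArg₂ (fun T T' => TensorProduct.map (TensorProduct.lift (kb n m n' m'))
    (TensorProduct.map (TensorProduct.lift (kb m p m' p')) (TensorProduct.lift (kb p n p' n')))
    (kron K T T')) h h'
  simp only [matMulTensor, kron, TensorProduct.sum_tmul, TensorProduct.tmul_sum, map_sum,
    TensorProduct.tensorTensorTensorComm_tmul, TensorProduct.congr_tmul, LinearEquiv.refl_apply,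
    TensorProduct.map_tmul, TensorProduct.lift.tmul, kb_single] at key
  rw [Fintype.sum_prod_type]
  refine Eq.trans ?_ (key.trans ?_)
  · simp only [matMulTensor, ← finProdFinEquiv.sum_comp, Fintype.sum_prod_type]
    exact sum6 fun x y x1 y1 x2 y2 =>
      Matrix.single (finProdFinEquiv (x, y)) (finProdFinEquiv (x1, y1)) (1 : K) ⊗ₜ[K]
        (Matrix.single (finProdFinEquiv (x1, y1)) (finProdFinEquiv (x2, y2)) (1 : K) ⊗ₜ[K]
          Matrix.single (finProdFinEquiv (x2, y2)) (finProdFinEquiv (x, y)) (1 : K))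
  · first | rfl | exact Finset.sum_comm

end Aux

/-- if `⟨n,m,p⟩ ≤ ⟨r⟩` then `⟨nmp,nmp,nmp⟩ ≤ ⟨r³⟩`. -/
theorem isRestriction_cube (K : Type) [Field K] (n m p r : ℕ)
    (hn : 0 < n) (hm : 0 < m) (hp : 0 < p) (hr : 0 < r)
    (h : IsRestriction K (matMulTensor K n m p) (unitTensor K r)) :
    IsRestriction K (matMulTensor K (n * m * p) (n * m * p) (n * m * p))
      (unitTensor K (r ^ 3)) := by
  have h1 := hasDec_of_restr _ _ h
  have h2 := hasDec_cyc _ _ _ _ h1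
  have h3 := hasDec_cyc _ _ _ _ h2
  have h4 := hasDec_kron _ _ _ _ _ _ _ _ (hasDec_kron _ _ _ _ _ _ _ _ h1 h2) h3
  rw [show m * p * n = n * m * p by ring, show p * n * m = n * m * p by ring] at h4
  refine restr_of_hasDec _ _ ?_ _ h4
  simp
  ring
end

section
/- Let K be a field. If the matrix multiplication tensor ⟨6,6,6⟩ is a restriction of the direct sum 137 ⊙ ⟨1⟩ ⊕ 8 ⊙ ⟨1,1,2⟩, then the matrix multiplication tensor ⟨216,216,216⟩ is a restriction of the unit tensor ⟨3581065⟩. -/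
open TensorProduct

section Helpers

/-- Coordinate form of rank at most `r`. -/
def Rk {K X Y Z : Type} [Field K] (F : X → Y → Z → K) (r : ℕ) : Prop :=
  ∃ (u : Fin r → X → K) (v : Fin r → Y → K) (w : Fin r → Z → K),
    ∀ x y z, F x y z = ∑ i, u i x * v i y * w i z

variable {K X Y Z : Type} [Field K]

theorem Rk.of_fintype {F : X → Y → Z → K} {ι : Type} [Fintype ι] {r : ℕ}
    (hr : Fintype.card ι = r)
    (u : ι → X → K) (v : ι → Y → K) (w : ι → Z → K)
    (h : ∀ x y z, F x y z = ∑ i, u i x * v i y * w i z) : Rk F r := by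
  let e := Fintype.equivFinOfCardEq hr
  refine ⟨fun i => u (e.symm i), fun i => v (e.symm i), fun i => w (e.symm i), ?_⟩
  intro x y z
  rw [h]
  exact (Equiv.sum_comp e.symm (fun i => u i x * v i y * w i z)).symm

theorem Rk.add {F G : X → Y → Z → K} {r s : ℕ} (hF : Rk F r) (hG : Rk G s) :
    Rk (fun x y z => F x y z + G x y z) (r + s) := by
  obtain ⟨u, v, w, h⟩ := hF
  obtain ⟨u', v', w', h'⟩ := hG
  refine Rk.of_fintype (ι := Fin r ⊕ Fin s) (by simp) (Sum.elim u u') (Sum.elim v v')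
    (Sum.elim w w') ?_
  intro x y z
  simp [h, h']

theorem Rk.mul {F G : X → Y → Z → K} {r s : ℕ} (hF : Rk F r) (hG : Rk G s) :
    Rk (fun x y z => F x y z * G x y z) (r * s) := by
  obtain ⟨u, v, w, h⟩ := hF
  obtain ⟨u', v', w', h'⟩ := hG
  refine Rk.of_fintype (ι := Fin r × Fin s) (by simp) (fun p x => u p.1 x * u' p.2 x)
    (fun p x => v p.1 x * v' p.2 x) (fun p x => w p.1 x * w' p.2 x) ?_
  intro x y z
  rw [h, h', Fintype.sum_mul_sum, Fintype.sum_prod_type]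
  refine Finset.sum_congr rfl fun i _ => Finset.sum_congr rfl fun j _ => ?_
  ring

theorem Rk.sum {ι : Type} [Fintype ι] {F : ι → X → Y → Z → K} {r : ℕ}
    (hF : ∀ i, Rk (F i) r) :
    Rk (fun x y z => ∑ i, F i x y z) (Fintype.card ι * r) := by
  choose u v w h using hF
  refine Rk.of_fintype (ι := ι × Fin r) (by simp) (fun p x => u p.1 p.2 x)
    (fun p x => v p.1 p.2 x) (fun p x => w p.1 p.2 x) ?_
  intro x y z
  rw [Fintype.sum_prod_type]
  exact Finset.sum_congr rfl fun i _ => h i x y z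

theorem Rk.congr {F G : X → Y → Z → K} {r s : ℕ} (hF : Rk F r)
    (h : ∀ x y z, G x y z = F x y z) (hrs : r = s) : Rk G s := by
  subst hrs
  have : G = F := by funext x y z; exact h x y z
  rwa [this]

/-- Strassen. -/
theorem Rk.strassen (p : Fin 2 → Fin 2 → X → K) (q : Fin 2 → Fin 2 → Y → K)
    (r : Fin 2 → Fin 2 → Z → K) :
    Rk (fun x y z => ∑ i, ∑ j, ∑ k, p i j x * q j k y * r k i z) 7 := by
  refine ⟨![fun x => p 0 0 x + p 1 1 x, fun x => p 1 0 x + p 1 1 x, fun x => p 0 0 x,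
      fun x => p 1 1 x, fun x => p 0 0 x + p 0 1 x, fun x => p 1 0 x - p 0 0 x,
      fun x => p 0 1 x - p 1 1 x],
    ![fun x => q 0 0 x + q 1 1 x, fun x => q 0 0 x, fun x => q 0 1 x - q 1 1 x,
      fun x => q 1 0 x - q 0 0 x, fun x => q 1 1 x, fun x => q 0 0 x + q 0 1 x,
      fun x => q 1 0 x + q 1 1 x],
    ![fun x => r 0 0 x + r 1 1 x, fun x => r 0 1 x - r 1 1 x, fun x => r 1 0 x + r 1 1 x,
      fun x => r 0 0 x + r 0 1 x, fun x => r 1 0 x - r 0 0 x, fun x => r 1 1 x,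
      fun x => r 0 0 x], ?_⟩
  intro x y z
  simp [Fin.sum_univ_succ]
  ring

theorem Rk.triple {n₁ : ℕ}
    (a₁ : Fin n₁ → X → K) (b₁ : Fin n₁ → Fin 2 → Y → K) (c₁ : Fin n₁ → Fin 2 → Z → K)
    (a₂ : Fin n₁ → Y → K) (b₂ : Fin n₁ → Fin 2 → Z → K) (c₂ : Fin n₁ → Fin 2 → X → K)
    (a₃ : Fin n₁ → Z → K) (b₃ : Fin n₁ → Fin 2 → X → K) (c₃ : Fin n₁ → Fin 2 → Y → K) :
    Rk (fun x y z => (∑ t, ∑ l, a₁ t x * b₁ t l y * c₁ t l z) *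
      (∑ t, ∑ l, a₂ t y * b₂ t l z * c₂ t l x) *
      (∑ t, ∑ l, a₃ t z * b₃ t l x * c₃ t l y)) (n₁ ^ 3 * 7) := by
  have key := Rk.sum (ι := Fin n₁ × Fin n₁ × Fin n₁) (fun t => Rk.strassen
    (fun i j x => a₁ t.1 x * c₂ t.2.1 i x * b₃ t.2.2 j x)
    (fun j k y => b₁ t.1 k y * a₂ t.2.1 y * c₃ t.2.2 j y)
    (fun k i z => c₁ t.1 k z * b₂ t.2.1 i z * a₃ t.2.2 z))
  refine key.congr ?_ (by simp; ring)
  intro x y z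
  rw [Fintype.sum_mul_sum, Finset.sum_mul, Fintype.sum_prod_type]
  refine Finset.sum_congr rfl fun s _ => ?_
  rw [Fintype.sum_mul_sum, Fintype.sum_prod_type]
  refine Finset.sum_congr rfl fun t _ => Finset.sum_congr rfl fun t' _ => ?_
  simp only [Fin.sum_univ_two]
  ring

theorem Rk.flat1 {n m : ℕ} (a : Fin n → X → K) (b : Fin n → Fin m → Y → K)
    (c : Fin n → Fin m → Z → K) :
    Rk (fun x y z => ∑ t, ∑ l, a t x * b t l y * c t l z) (n * m) := by
  refine Rk.of_fintype (ι := Fin n × Fin m) (by simp) (fun p => a p.1) (fun p => b p.1 p.2)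
    (fun p => c p.1 p.2) ?_
  intro x y z
  rw [Fintype.sum_prod_type]

theorem Rk.rot {F : X → Y → Z → K} {r : ℕ} (h : Rk F r) :
    Rk (fun z x y => F x y z) r := by
  obtain ⟨u, v, w, h⟩ := h
  refine ⟨w, u, v, fun z x y => ?_⟩
  refine (h x y z).trans ?_
  exact Finset.sum_congr rfl fun i _ => by ring

theorem Rk.all {m n : ℕ}
    (x₁ : Fin m → X → K) (y₁ : Fin m → Y → K) (z₁ : Fin m → Z → K)
    (x₂ : Fin m → Y → K) (y₂ : Fin m → Z → K) (z₂ : Fin m → X → K)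
    (x₃ : Fin m → Z → K) (y₃ : Fin m → X → K) (z₃ : Fin m → Y → K)
    (a₁ : Fin n → X → K) (b₁ : Fin n → Fin 2 → Y → K) (c₁ : Fin n → Fin 2 → Z → K)
    (a₂ : Fin n → Y → K) (b₂ : Fin n → Fin 2 → Z → K) (c₂ : Fin n → Fin 2 → X → K)
    (a₃ : Fin n → Z → K) (b₃ : Fin n → Fin 2 → X → K) (c₃ : Fin n → Fin 2 → Y → K) :
    Rk (fun x y z =>
      (∑ s, x₁ s x * y₁ s y * z₁ s z + ∑ t, ∑ l, a₁ t x * b₁ t l y * c₁ t l z) *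
      (∑ s, x₂ s y * y₂ s z * z₂ s x + ∑ t, ∑ l, a₂ t y * b₂ t l z * c₂ t l x) *
      (∑ s, x₃ s z * y₃ s x * z₃ s y + ∑ t, ∑ l, a₃ t z * b₃ t l x * c₃ t l y))
      (m ^ 3 + n * m ^ 2 * 6 + n ^ 2 * m * 12 + n ^ 3 * 7) := by
  have A1 : Rk (fun x y z => ∑ s, x₁ s x * y₁ s y * z₁ s z) m := ⟨_, _, _, fun _ _ _ => rfl⟩
  have A2' : Rk (fun y z x => ∑ s, x₂ s y * y₂ s z * z₂ s x) m := ⟨_, _, _, fun _ _ _ => rfl⟩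
  have A3' : Rk (fun z x y => ∑ s, x₃ s z * y₃ s x * z₃ s y) m := ⟨_, _, _, fun _ _ _ => rfl⟩
  have A2 := A2'.rot
  have A3 := A3'.rot.rot
  have B1 := Rk.flat1 a₁ b₁ c₁
  have B2 := (Rk.flat1 a₂ b₂ c₂).rot
  have B3 := (Rk.flat1 a₃ b₃ c₃).rot.rot
  have T := Rk.triple a₁ b₁ c₁ a₂ b₂ c₂ a₃ b₃ c₃
  refine ((((((((A1.mul A2).mul A3).add ((A1.mul A2).mul B3)).add ((A1.mul B2).mul A3)).add
    ((B1.mul A2).mul A3)).add ((A1.mul B2).mul B3)).add ((B1.mul A2).mul B3)).add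
    ((B1.mul B2).mul A3) |>.add T).congr ?_ (by ring)
  intro x y z
  ring

/-- Coefficient functional. -/
noncomputable def cf {V₁ V₂ V₃ : Type} [AddCommGroup V₁] [Module K V₁] [AddCommGroup V₂]
    [Module K V₂] [AddCommGroup V₃] [Module K V₃]
    (f : V₁ →ₗ[K] K) (g : V₂ →ₗ[K] K) (h : V₃ →ₗ[K] K) : V₁ ⊗[K] (V₂ ⊗[K] V₃) →ₗ[K] K :=
  LinearMap.mul' K K ∘ₗ TensorProduct.map f (LinearMap.mul' K K ∘ₗ TensorProduct.map g h)

theorem cf_tmul {V₁ V₂ V₃ : Type} [AddCommGroup V₁] [Module K V₁] [AddCommGroup V₂]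
    [Module K V₂] [AddCommGroup V₃] [Module K V₃]
    (f : V₁ →ₗ[K] K) (g : V₂ →ₗ[K] K) (h : V₃ →ₗ[K] K) (a : V₁) (b : V₂) (c : V₃) :
    cf f g h (a ⊗ₜ[K] (b ⊗ₜ[K] c)) = f a * g b * h c := by
  simp [cf, mul_assoc]

/-- The delta function. -/
def dl (K : Type) [Field K] {n m p : Type} [DecidableEq n] [DecidableEq m] [DecidableEq p]
    (x : n × m) (y : m × p) (z : p × n) : K :=
  (if x.2 = y.1 then 1 else 0) * (if y.2 = z.1 then 1 else 0) * (if z.2 = x.1 then 1 else 0)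

theorem cf_matMul (n m p : ℕ) (x : Fin n × Fin m) (y : Fin m × Fin p) (z : Fin p × Fin n) :
    cf (Matrix.entryLinearMap K K x.1 x.2) (Matrix.entryLinearMap K K y.1 y.2)
      (Matrix.entryLinearMap K K z.1 z.2) (matMulTensor K n m p) = dl K x y z := by
  obtain ⟨i, j⟩ := x
  obtain ⟨j', k⟩ := y
  obtain ⟨k', i'⟩ := z
  simp only [matMulTensor, map_sum, cf_tmul, Matrix.entryLinearMap_apply, Matrix.single_apply, dl]
  rw [Finset.sum_eq_single i, Finset.sum_eq_single j, Finset.sum_eq_single k]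
  · simp only [true_and, and_true, if_true, one_mul, eq_comm]
    split_ifs <;> simp_all
  · intro b _ hb; simp [hb]
  · simp
  · intro b _ hb; simp [hb]
  · simp
  · intro b _ hb; simp [hb]
  · simp

theorem tensor_ext {n m p : ℕ}
    (S T : Matrix (Fin n) (Fin m) K ⊗[K]
      (Matrix (Fin m) (Fin p) K ⊗[K] Matrix (Fin p) (Fin n) K))
    (h : ∀ (x : Fin n × Fin m) (y : Fin m × Fin p) (z : Fin p × Fin n),
      cf (Matrix.entryLinearMap K K x.1 x.2) (Matrix.entryLinearMap K K y.1 y.2)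
        (Matrix.entryLinearMap K K z.1 z.2) S =
      cf (Matrix.entryLinearMap K K x.1 x.2) (Matrix.entryLinearMap K K y.1 y.2)
        (Matrix.entryLinearMap K K z.1 z.2) T) : S = T := by
  let B := (Matrix.stdBasis K (Fin n) (Fin m)).tensorProduct
    ((Matrix.stdBasis K (Fin m) (Fin p)).tensorProduct (Matrix.stdBasis K (Fin p) (Fin n)))
  have hB : ∀ x y z, B.coord (x, y, z) = cf (Matrix.entryLinearMap K K x.1 x.2)
      (Matrix.entryLinearMap K K y.1 y.2) (Matrix.entryLinearMap K K z.1 z.2) := by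
    intro x y z
    refine B.ext ?_
    rintro ⟨⟨a, a'⟩, ⟨b, b'⟩, ⟨c, c'⟩⟩
    obtain ⟨x, x'⟩ := x
    obtain ⟨y, y'⟩ := y
    obtain ⟨z, z'⟩ := z
    rw [Module.Basis.coord_apply, Module.Basis.repr_self]
    simp only [B, Module.Basis.tensorProduct_apply, cf_tmul, Matrix.stdBasis_eq_single,
      Matrix.entryLinearMap_apply, Matrix.single_apply, Finsupp.single_apply, Prod.mk.injEq]
    split_ifs <;> simp_all
  refine B.ext_elem ?_
  rintro ⟨x, y, z⟩
  have := h x y z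
  rw [← hB] at this
  exact this

theorem restr_of_Rk {n r : ℕ}
    (h : Rk (dl K : Fin n × Fin n → Fin n × Fin n → Fin n × Fin n → K) r) :
    IsRestriction K (matMulTensor K n n n) (unitTensor K r) := by
  obtain ⟨u, v, w, h⟩ := h
  let P : (Fin r → Fin n × Fin n → K) → ((Fin r → K) →ₗ[K] Matrix (Fin n) (Fin n) K) :=
    fun u => Fintype.linearCombination K (fun s => (Matrix.of fun i j => u s (i, j)))
  have hP : ∀ u s, P u (Pi.single s 1) = Matrix.of fun i j => u s (i, j) := by
    intro u s
    simp [P]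
  refine ⟨P u, P v, P w, tensor_ext _ _ ?_⟩
  intro x y z
  rw [cf_matMul, h]
  simp only [unitTensor, map_sum, TensorProduct.map_tmul, hP, cf_tmul,
    Matrix.entryLinearMap_apply, Matrix.of_apply]

theorem extract {n m k : ℕ} (h : IsRestriction K (matMulTensor K n n n)
      (dsum K (copies K m (unitTensor K 1)) (copies K k (matMulTensor K 1 1 2)))) :
    ∃ (x y z : Fin m → Fin n × Fin n → K) (a : Fin k → Fin n × Fin n → K)
      (b c : Fin k → Fin 2 → Fin n × Fin n → K), ∀ X Y Z, dl K X Y Z =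
      ∑ s, x s X * y s Y * z s Z + ∑ t, ∑ l, a t X * b t l Y * c t l Z := by
  obtain ⟨f, g, e, h⟩ := h
  refine ⟨fun s X => f (LinearMap.inl K _ _ (LinearMap.single K _ s (Pi.single 0 1))) X.1 X.2,
    fun s X => g (LinearMap.inl K _ _ (LinearMap.single K _ s (Pi.single 0 1))) X.1 X.2,
    fun s X => e (LinearMap.inl K _ _ (LinearMap.single K _ s (Pi.single 0 1))) X.1 X.2,
    fun s X => f (LinearMap.inr K _ _ (LinearMap.single K _ s (Matrix.single 0 0 1))) X.1 X.2,
    fun s l X => g (LinearMap.inr K _ _ (LinearMap.single K _ s (Matrix.single 0 l 1))) X.1 X.2,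
    fun s l X => e (LinearMap.inr K _ _ (LinearMap.single K _ s (Matrix.single l 0 1))) X.1 X.2,
    ?_⟩
  intro X Y Z
  rw [← cf_matMul, h]
  simp only [dsum, copies, unitTensor, matMulTensor, Fin.sum_univ_one, map_add, map_sum,
    TensorProduct.map_tmul, cf_tmul, Matrix.entryLinearMap_apply, Fin.isValue]

theorem dl_rot {n : Type} [DecidableEq n] (x y z : n × n) : dl K x y z = dl K y z x := by
  simp only [dl]; ring

theorem dl_prod {N n : Type} [DecidableEq n] [DecidableEq N] (e : N ≃ n × n × n)
    (x y z : N × N) :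
    dl K x y z = dl K ((e x.1).1, (e x.2).1) ((e y.1).1, (e y.2).1) ((e z.1).1, (e z.2).1) *
      dl K ((e y.1).2.1, (e y.2).2.1) ((e z.1).2.1, (e z.2).2.1) ((e x.1).2.1, (e x.2).2.1) *
      dl K ((e z.1).2.2, (e z.2).2.2) ((e x.1).2.2, (e x.2).2.2) ((e y.1).2.2, (e y.2).2.2) := by
  have key : ∀ a b : N, (if a = b then (1 : K) else 0) = (if (e a).1 = (e b).1 then 1 else 0) *
      (if (e a).2.1 = (e b).2.1 then 1 else 0) * (if (e a).2.2 = (e b).2.2 then 1 else 0) := by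
    intro a b
    have : a = b ↔ (e a).1 = (e b).1 ∧ (e a).2.1 = (e b).2.1 ∧ (e a).2.2 = (e b).2.2 := by
      rw [← e.injective.eq_iff, Prod.ext_iff, Prod.ext_iff]
    simp only [this]
    split_ifs <;> simp_all
  simp only [dl, key]
  ring

theorem general {N n m k : ℕ} (q : Fin N ≃ Fin n × Fin n × Fin n)
    (h : IsRestriction K (matMulTensor K n n n)
      (dsum K (copies K m (unitTensor K 1)) (copies K k (matMulTensor K 1 1 2)))) :
    IsRestriction K (matMulTensor K N N N)
      (unitTensor K (m ^ 3 + k * m ^ 2 * 6 + k ^ 2 * m * 12 + k ^ 3 * 7)) := by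
  obtain ⟨x, y, z, a, b, c, h⟩ := extract h
  apply restr_of_Rk
  let p₁ : Fin N × Fin N → Fin n × Fin n := fun X => ((q X.1).1, (q X.2).1)
  let p₂ : Fin N × Fin N → Fin n × Fin n := fun X => ((q X.1).2.1, (q X.2).2.1)
  let p₃ : Fin N × Fin N → Fin n × Fin n := fun X => ((q X.1).2.2, (q X.2).2.2)
  refine (Rk.all (fun s X => x s (p₁ X)) (fun s X => y s (p₁ X)) (fun s X => z s (p₁ X))
    (fun s X => x s (p₂ X)) (fun s X => y s (p₂ X)) (fun s X => z s (p₂ X))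
    (fun s X => x s (p₃ X)) (fun s X => y s (p₃ X)) (fun s X => z s (p₃ X))
    (fun s X => a s (p₁ X)) (fun s l X => b s l (p₁ X)) (fun s l X => c s l (p₁ X))
    (fun s X => a s (p₂ X)) (fun s l X => b s l (p₂ X)) (fun s l X => c s l (p₂ X))
    (fun s X => a s (p₃ X)) (fun s l X => b s l (p₃ X)) (fun s l X => c s l (p₃ X))).congr
    ?_ rfl
  intro X Y Z
  rw [dl_prod q, h, h, h]

end Helpers

set_option maxHeartbeats 2000000 in
/-- if `⟨6,6,6⟩ ≤ 137 ⊙ ⟨1⟩ ⊕ 8 ⊙ ⟨1,1,2⟩`, then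
`⟨216,216,216⟩ ≤ ⟨3581065⟩`. -/
theorem six_cubed_restriction (K : Type) [Field K]
    (h : IsRestriction K (matMulTensor K 6 6 6)
      (dsum K (copies K 137 (unitTensor K 1)) (copies K 8 (matMulTensor K 1 1 2)))) :
    IsRestriction K (matMulTensor K 216 216 216) (unitTensor K 3581065) := by
  have q : Fin 216 ≃ Fin 6 × Fin 6 × Fin 6 := Fintype.equivOfCardEq (by
    simp only [Fintype.card_prod, Fintype.card_fin])
  have h2 := general q h
  have e : 137 ^ 3 + 8 * 137 ^ 2 * 6 + 8 ^ 2 * 137 * 12 + 8 ^ 3 * 7 = 3581065 := by norm_num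
  rw [e] at h2
  exact h2
end
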